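/- Let n ≥ 5 and let (a_{ij})_{1≤i,j≤n} be a real array satisfying a_{ij} = a_{ji} for all i ≠ j, with σ_f² > 0. Let π be a random permutation of {1,…,n} whose distribution is constant on cycle type (i.e., P(π = τ) = P(π = τ′) whenever τ and τ′ have the same cycle type) and which almost surely has no fixed points and no two-cycles, and let Y = Σ_{i=1}^n a_{iπ(i)}. Then for all t ≥ 0, both P(Y − μ ≥ t) and P(Y − μ ≤ −t) are at most exp(−t² / (2(σ_f² + 40 a_o t))), where μ = (n−2) a_{oo}, σ_f² = (1/(n−1)) Σ_{i≠j} (a_{ij} − 2a_{io} + a_{oo})², and a_o = max_{i≠j} |a_{ij} − 2a_{io} + a_{oo}|. -/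

import Mathlib

open MeasureTheory ProbabilityTheory Real

noncomputable instance (n : ℕ) : MeasurableSpace (Equiv.Perm (Fin n)) := ⊤

/-- `a_{io} = (1/(n-2)) ∑_{j ≠ i} a_{ij}`. -/
noncomputable def aio (n : ℕ) (a : Fin n → Fin n → ℝ) (i : Fin n) : ℝ :=
  (1 / ((n : ℝ) - 2)) * ∑ j ∈ Finset.univ.filter (· ≠ i), a i j

/-- `a_{oo} = (1/((n-1)(n-2))) ∑_{i ≠ j} a_{ij}`. -/
noncomputable def aoo (n : ℕ) (a : Fin n → Fin n → ℝ) : ℝ :=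
  (1 / (((n : ℝ) - 1) * ((n : ℝ) - 2))) * ∑ i, ∑ j ∈ Finset.univ.filter (· ≠ i), a i j

/-- The variance `σ_f² = (1/(n-1)) ∑_{i ≠ j} (a_{ij} - 2a_{io} + a_{oo})²`. -/
noncomputable def sigmaF2 (n : ℕ) (a : Fin n → Fin n → ℝ) : ℝ :=
  (1 / ((n : ℝ) - 1)) *
    ∑ i, ∑ j ∈ Finset.univ.filter (· ≠ i), (a i j - 2 * aio n a i + aoo n a) ^ 2

/-! As the law of `π` is invariant under conjugation, it suffices to bound, for each permutation
`p` without cycles of length one or two, the tails of `Y g = ∑ x, b (g x) (g (p x))` for uniform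
`g`, where `b` is the centred array.

`Y` is an eigenfunction of the random transposition walk:
`∑ u, ∑ v, (Y g - Y (g * swap u v)) = 4 * (n - 1) * Y g`.
Hence `4 * (n - 1) * ∑ g, Y g * exp (θ * Y g)` is a Dirichlet form, and convexity of `exp` bounds it
by `θ / 2` times the sum of `(Y g - Y (g * swap u v)) ^ 2 * exp (θ * Y g)`. The increment depends on
`g` only at the at most six points which `p` joins to `{u, v}`. Resampling `g` there changes `Y` by
at most `40 * A`, where `|b i j| ≤ A`, so that the increment decouples from `exp (θ * Y g)` at the
cost of a factor `exp (40 * A * θ)`. The same eigenvalue identity turns the mean squared increment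
into the variance of `Y`. The moment generating function `m` thus satisfies
`m' θ ≤ θ * σ² * exp (40 * A * θ) * m θ`, and integrating this gives a Bernstein bound.
-/

open Finset

theorem exp_sub_one_le_mul {d : ℝ} (hd : 0 ≤ d) : exp d - 1 ≤ d * ((exp d + 1) / 2) := by
  have hderiv (x : ℝ) : HasDerivAt (fun x ↦ x * ((exp x + 1) / 2) - exp x)
      (1 * ((exp x + 1) / 2) + x * (exp x / 2) - exp x) x :=
    ((hasDerivAt_id x).mul (((hasDerivAt_exp x).add_const 1).div_const 2)).sub (hasDerivAt_exp x)
  have hmono : Monotone fun x ↦ x * ((exp x + 1) / 2) - exp x := by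
    refine monotone_of_deriv_nonneg (fun x ↦ (hderiv x).differentiableAt) fun x ↦ ?_
    have h : (-x + 1) * exp x ≤ 1 := by
      calc (-x + 1) * exp x ≤ exp (-x) * exp x := by gcongr; exact add_one_le_exp (-x)
        _ = 1 := by rw [← exp_add, neg_add_cancel, exp_zero]
    rw [(hderiv x).deriv]
    linarith
  have := hmono hd
  simp only [exp_zero] at this
  linarith

theorem sub_mul_exp_sub_exp_le (x y : ℝ) :
    (x - y) * (exp x - exp y) ≤ (x - y) ^ 2 * ((exp x + exp y) / 2) := by
  wlog hyx : y ≤ x generalizing x y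
  · linarith [this y x (le_of_not_ge hyx)]
  have hexp : exp x = exp y * exp (x - y) := by rw [← exp_add, add_sub_cancel]
  calc (x - y) * (exp x - exp y) = (x - y) * exp y * (exp (x - y) - 1) := by rw [hexp]; ring
    _ ≤ (x - y) * exp y * ((x - y) * ((exp (x - y) + 1) / 2)) := by
      have := mul_nonneg (sub_nonneg.2 hyx) (exp_pos y).le
      gcongr
      exact exp_sub_one_le_mul (sub_nonneg.2 hyx)
    _ = (x - y) ^ 2 * ((exp x + exp y) / 2) := by rw [hexp]; ring

section FiniteGroup

variable {G : Type*} [Group G] [Fintype G]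

theorem sum_sub_mul_right_mul_eq (Y f : G → ℝ) {r : G} (hr : r * r = 1) :
    ∑ g, (Y g - Y (g * r)) * f g =
      1 / 2 * ∑ g, (Y g - Y (g * r)) * (f g - f (g * r)) := by
  have hswap : ∑ g, (Y (g * r) - Y g) * f (g * r) = ∑ g, (Y g - Y (g * r)) * f g := by
    rw [← Equiv.sum_comp (Equiv.mulRight r) fun g ↦ (Y g - Y (g * r)) * f g]
    simp [mul_assoc, hr]
  calc ∑ g, (Y g - Y (g * r)) * f g
      = 1 / 2 * (∑ g, (Y g - Y (g * r)) * f g + ∑ g, (Y (g * r) - Y g) * f (g * r)) := by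
        rw [hswap]; ring
    _ = 1 / 2 * ∑ g, (Y g - Y (g * r)) * (f g - f (g * r)) := by
        rw [← sum_add_distrib]
        congr! 2 with g
        ring

theorem sum_sq_sub_mul_right_mul (Y f : G → ℝ) {r : G} (hr : r * r = 1) :
    ∑ g, (Y g - Y (g * r)) ^ 2 * f (g * r) = ∑ g, (Y g - Y (g * r)) ^ 2 * f g := by
  rw [← Equiv.sum_comp (Equiv.mulRight r) fun g ↦ (Y g - Y (g * r)) ^ 2 * f g]
  simp [mul_assoc, hr, sub_sq_comm]

theorem sum_sub_mul_right_mul_exp_le (Y : G → ℝ) {r : G} (hr : r * r = 1) {θ : ℝ} (hθ : 0 < θ) :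
    ∑ g, (Y g - Y (g * r)) * exp (θ * Y g) ≤
      θ / 2 * ∑ g, (Y g - Y (g * r)) ^ 2 * exp (θ * Y g) := by
  have hpoint (g : G) : (Y g - Y (g * r)) * (exp (θ * Y g) - exp (θ * Y (g * r))) ≤
      θ / 2 * ((Y g - Y (g * r)) ^ 2 * exp (θ * Y g) +
        (Y g - Y (g * r)) ^ 2 * exp (θ * Y (g * r))) := by
    have := sub_mul_exp_sub_exp_le (θ * Y g) (θ * Y (g * r))
    refine le_of_mul_le_mul_left ?_ hθ
    linarith
  calc ∑ g, (Y g - Y (g * r)) * exp (θ * Y g)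
      = 1 / 2 * ∑ g, (Y g - Y (g * r)) * (exp (θ * Y g) - exp (θ * Y (g * r))) :=
        sum_sub_mul_right_mul_eq Y (fun g ↦ exp (θ * Y g)) hr
    _ ≤ 1 / 2 * ∑ g, θ / 2 * ((Y g - Y (g * r)) ^ 2 * exp (θ * Y g) +
        (Y g - Y (g * r)) ^ 2 * exp (θ * Y (g * r))) := by
        exact mul_le_mul_of_nonneg_left (sum_le_sum fun g _ ↦ hpoint g) (by norm_num)
    _ = θ / 2 * ∑ g, (Y g - Y (g * r)) ^ 2 * exp (θ * Y g) := by
        rw [← mul_sum, sum_add_distrib, sum_sq_sub_mul_right_mul Y (fun g ↦ exp (θ * Y g)) hr]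
        ring

/-- Averaged over `s`, the factor `F (g * s)` no longer depends on `g`, whereas `g * r` is chosen
close enough to `g` to control `H`. -/
theorem card_mul_sum_mul_le_of_resample {F H : G → ℝ} {C : ℝ} (hF : ∀ g, 0 ≤ F g)
    (hresample : ∀ s, ∃ r, ∀ g, F (g * r) = F (g * s) ∧ H (g * r) ≤ C * H g) :
    Fintype.card G * ∑ g, F g * H g ≤ C * (∑ g, F g) * ∑ g, H g := by
  choose r hr using hresample
  calc Fintype.card G * ∑ g, F g * H g
      = ∑ s, ∑ g, F (g * r s) * H (g * r s) := by
        have hright (s : G) := Equiv.sum_comp (Equiv.mulRight (r s)) fun g ↦ F g * H g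
        simp only [Equiv.coe_mulRight] at hright
        simp [hright]
    _ ≤ ∑ s, ∑ g, F (g * s) * (C * H g) := by
        refine sum_le_sum fun s _ ↦ sum_le_sum fun g _ ↦ ?_
        rw [(hr s g).1]
        exact mul_le_mul_of_nonneg_left (hr s g).2 (hF _)
    _ = ∑ g, (∑ s, F (g * s)) * (C * H g) := by
        simp_rw [sum_mul]
        exact sum_comm
    _ = C * (∑ g, F g) * ∑ g, H g := by
        have hleft (g : G) : ∑ s, F (g * s) = ∑ s, F s := Equiv.sum_comp (Equiv.mulLeft g) F
        simp_rw [hleft, ← mul_sum]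
        ring

end FiniteGroup

section Resampling

variable {α : Type*} [Fintype α] [DecidableEq α]

/-- The Hoeffding statistic `∑ i, b i (π i)` of the conjugate `π = g * p * g⁻¹`, written as a
function of `g` by substituting `i = g x`. -/
def conjSum (b : α → α → ℝ) (p g : Equiv.Perm α) : ℝ :=
  ∑ x, b (g x) (g (p x))

omit [DecidableEq α] in
theorem sum_conj_apply_eq_conjSum (b : α → α → ℝ) (p g : Equiv.Perm α) :
    ∑ i, b i ((g * p * g⁻¹) i) = conjSum b p g := by
  rw [conjSum, ← Equiv.sum_comp g fun i ↦ b i ((g * p * g⁻¹) i)]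
  simp

/-- The points at distance at most one from `S` in the cycle graph of `p`. -/
def orbitNbhd (p : Equiv.Perm α) (S : Finset α) : Finset α :=
  S ∪ S.image p ∪ S.image p.symm

theorem exists_perm_eqOn_support_subset (s : Equiv.Perm α) (X : Finset α) :
    ∃ r : Equiv.Perm α, (∀ x ∈ X, r x = s x) ∧ r.support ⊆ X ∪ X.image s := by
  obtain ⟨σ, hσ⟩ := Equiv.Perm.exists_extending_pair
    (fun x : X ↦ (⟨x, mem_union_left _ x.2⟩ : {y // y ∈ X ∪ X.image s}))
    (fun x : X ↦ ⟨s x, mem_union_right _ (mem_image_of_mem s x.2)⟩)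
    (.of_comp (f := Subtype.val) Subtype.val_injective)
    (.of_comp (f := Subtype.val) (s.injective.comp Subtype.val_injective))
  refine ⟨Equiv.Perm.ofSubtype σ, fun x hx ↦ ?_, fun y hy ↦ ?_⟩
  · rw [Equiv.Perm.ofSubtype_apply_of_mem σ (mem_union_left _ hx)]
    exact congrArg Subtype.val (hσ ⟨x, hx⟩)
  · by_contra h
    exact Equiv.Perm.mem_support.1 hy (Equiv.Perm.ofSubtype_apply_of_not_mem σ h)

theorem conjSum_mul_le {b : α → α → ℝ} {A : ℝ} (hA : ∀ i j, |b i j| ≤ A)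
    (p g r : Equiv.Perm α) :
    conjSum b p (g * r) ≤ conjSum b p g + 2 * A * #(r.support ∪ r.support.image p.symm) := by
  have hdiff : conjSum b p (g * r) - conjSum b p g = ∑ x ∈ r.support ∪ r.support.image p.symm,
      (b ((g * r) x) ((g * r) (p x)) - b (g x) (g (p x))) := by
    rw [conjSum, conjSum, ← sum_sub_distrib]
    refine (sum_subset (subset_univ _) fun x _ hx ↦ ?_).symm
    have hx' : r x = x ∧ r (p x) = p x := by
      simpa [Equiv.eq_symm_apply, Equiv.symm_apply_eq] using hx
    simp [hx'.1, hx'.2]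
  have hterm (x : α) : b ((g * r) x) ((g * r) (p x)) - b (g x) (g (p x)) ≤ 2 * A := by
    linarith [(abs_le.1 (hA ((g * r) x) ((g * r) (p x)))).2, (abs_le.1 (hA (g x) (g (p x)))).1]
  have := sum_le_card_nsmul (r.support ∪ r.support.image p.symm) _ _ fun x _ ↦ hterm x
  rw [← hdiff, nsmul_eq_mul] at this
  linarith

theorem conjSum_sub_conjSum_mul_congr (b : α → α → ℝ) {p g h τ : Equiv.Perm α}
    (hgh : ∀ x ∈ orbitNbhd p τ.support, g x = h x) :
    conjSum b p g - conjSum b p (g * τ) = conjSum b p h - conjSum b p (h * τ) := by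
  simp_rw [conjSum, ← sum_sub_distrib]
  refine sum_congr rfl fun x _ ↦ ?_
  by_cases hx : τ x = x ∧ τ (p x) = p x
  · simp [hx.1, hx.2]
  have hτ {y : α} (hy : y ∈ orbitNbhd p τ.support) : τ y ∈ orbitNbhd p τ.support := by
    by_cases hfix : τ y = y
    · rwa [hfix]
    · simp [orbitNbhd, hfix]
  have hmem : x ∈ orbitNbhd p τ.support ∧ p x ∈ orbitNbhd p τ.support := by
    rcases not_and_or.1 hx with hx | hx
    · simp [orbitNbhd, hx]
    · simp [orbitNbhd, hx, Equiv.symm_apply_eq]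
  simp only [Equiv.Perm.mul_apply]
  rw [hgh _ hmem.1, hgh _ hmem.2, hgh _ (hτ hmem.1), hgh _ (hτ hmem.2)]

omit [Fintype α] in
theorem card_orbitNbhd_le (p : Equiv.Perm α) (S : Finset α) : #(orbitNbhd p S) ≤ 3 * #S := by
  have hunion := card_union_le (S ∪ S.image p) (S.image p.symm)
  have hunion' := card_union_le S (S.image p)
  have himage : #(S.image p) ≤ #S := card_image_le
  have himage_symm : #(S.image p.symm) ≤ #S := card_image_le
  rw [orbitNbhd]
  omega

omit [Fintype α] in
theorem card_orbitNbhd_union_image_symm_le (p : Equiv.Perm α) (S : Finset α) :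
    #(orbitNbhd p S ∪ (orbitNbhd p S).image p.symm) ≤ 4 * #S := by
  have hsub : orbitNbhd p S ∪ (orbitNbhd p S).image p.symm ⊆
      orbitNbhd p S ∪ (S.image p.symm).image p.symm := by
    intro x
    simp only [orbitNbhd, mem_union, mem_image]
    grind
  have hcard := card_le_card hsub
  have hunion := card_union_le (orbitNbhd p S) ((S.image p.symm).image p.symm)
  have hnbhd := card_orbitNbhd_le p S
  have himage : #((S.image p.symm).image p.symm) ≤ #S := card_image_le.trans card_image_le
  omega

theorem card_support_union_image_symm_le {p s r : Equiv.Perm α} {S : Finset α}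
    (hr : r.support ⊆ orbitNbhd p S ∪ (orbitNbhd p S).image s) :
    #(r.support ∪ r.support.image p.symm) ≤ 10 * #S := by
  set N := orbitNbhd p S
  have hsub : r.support ∪ r.support.image p.symm ⊆
      (N ∪ N.image p.symm) ∪ (N.image s ∪ (N.image s).image p.symm) := by
    have := image_subset_image (f := p.symm) hr
    grind
  have hcard := card_le_card hsub
  have hunion := card_union_le (N ∪ N.image p.symm) (N.image s ∪ (N.image s).image p.symm)
  have hunion' := card_union_le (N.image s) ((N.image s).image p.symm)
  have hnbhd : #(N ∪ N.image p.symm) ≤ 4 * #S := card_orbitNbhd_union_image_symm_le p S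
  have himage : #(N.image s) ≤ 3 * #S := card_image_le.trans (card_orbitNbhd_le p S)
  have himage_symm : #((N.image s).image p.symm) ≤ #(N.image s) := card_image_le
  omega

theorem conjSum_decoupling {b : α → α → ℝ} {A : ℝ} (hA0 : 0 ≤ A) (hA : ∀ i j, |b i j| ≤ A)
    (p τ : Equiv.Perm α) {θ : ℝ} (hθ : 0 ≤ θ) :
    Fintype.card (Equiv.Perm α) *
        ∑ g, (conjSum b p g - conjSum b p (g * τ)) ^ 2 * exp (θ * conjSum b p g) ≤
      exp (20 * A * #τ.support * θ) * (∑ g, (conjSum b p g - conjSum b p (g * τ)) ^ 2) *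
        ∑ g, exp (θ * conjSum b p g) := by
  refine card_mul_sum_mul_le_of_resample (fun g ↦ sq_nonneg _) fun s ↦ ?_
  obtain ⟨r, hrs, hrsupp⟩ := exists_perm_eqOn_support_subset s (orbitNbhd p τ.support)
  refine ⟨r, fun g ↦ ⟨?_, ?_⟩⟩
  · rw [conjSum_sub_conjSum_mul_congr b (h := g * s) fun x hx ↦ by simp [hrs x hx]]
  · have hcard : (#(r.support ∪ r.support.image p.symm) : ℝ) ≤ 10 * #τ.support :=
      mod_cast card_support_union_image_symm_le hrsupp
    have hchange : conjSum b p (g * r) ≤ conjSum b p g + 20 * A * #τ.support := by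
      calc conjSum b p (g * r) ≤ conjSum b p g + 2 * A * (10 * #τ.support) :=
            (conjSum_mul_le hA p g r).trans (by gcongr)
        _ = _ := by ring
    calc exp (θ * conjSum b p (g * r)) ≤ exp (θ * (conjSum b p g + 20 * A * #τ.support)) := by
          gcongr
      _ = exp (20 * A * #τ.support * θ) * exp (θ * conjSum b p g) := by
          rw [← exp_add]; ring_nf

end Resampling

section CenteredArray

variable {α : Type*} [Fintype α]

/-- Arrays centred as in the theorem: symmetric, with zero diagonal and zero row sums. -/
structure IsCentered (b : α → α → ℝ) : Prop where
  symm : ∀ i j, b i j = b j i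
  diag : ∀ i, b i i = 0
  sum_row : ∀ i, ∑ j, b i j = 0

variable {b : α → α → ℝ} {p : Equiv.Perm α}

theorem IsCentered.neg (hb : IsCentered b) : IsCentered (fun i j ↦ -b i j) where
  symm i j := by rw [hb.symm]
  diag i := by rw [hb.diag, neg_zero]
  sum_row i := by rw [sum_neg_distrib, hb.sum_row, neg_zero]

theorem IsCentered.comp_perm (hb : IsCentered b) (g : Equiv.Perm α) :
    IsCentered fun i j ↦ b (g i) (g j) where
  symm _ _ := hb.symm _ _
  diag _ := hb.diag _
  sum_row i := (Equiv.sum_comp g (b (g i))).trans (hb.sum_row (g i))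

variable [DecidableEq α]

theorem IsCentered.sum_sub_swap_apply (hb : IsCentered b) {x y : α} (hxy : x ≠ y) :
    ∑ u, ∑ v, (b x y - b (Equiv.swap u v x) (Equiv.swap u v y)) =
      4 * ((Fintype.card α : ℝ) - 1) * b x y := by
  have hpoint (u v : α) : b x y - b (Equiv.swap u v x) (Equiv.swap u v y) =
      (if u = x then b x y - b y v else 0) + (if v = x then b x y - b y u else 0) +
      (if u = y then b x y - b x v else 0) + (if v = y then b x y - b x u else 0) -
      (if u = x then if v = y then 2 * b x y else 0 else 0) -
      (if u = y then if v = x then 2 * b x y else 0 else 0) := by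
    have := hb.diag
    have := hb.symm
    simp only [Equiv.swap_apply_def]
    grind
  simp only [hpoint, sum_sub_distrib, sum_add_distrib, sum_ite_irrel, sum_ite_eq', mem_univ,
    if_true, sum_const_zero, sum_const, card_univ, nsmul_eq_mul, hb.sum_row]
  ring

theorem IsCentered.sum_sub_conjSum_mul_swap (hb : IsCentered b) (hp : ∀ x, p x ≠ x)
    (g : Equiv.Perm α) :
    ∑ u, ∑ v, (conjSum b p g - conjSum b p (g * Equiv.swap u v)) =
      4 * ((Fintype.card α : ℝ) - 1) * conjSum b p g := by
  calc ∑ u, ∑ v, (conjSum b p g - conjSum b p (g * Equiv.swap u v))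
      = ∑ x, ∑ u, ∑ v, (b (g x) (g (p x)) -
          b (g (Equiv.swap u v x)) (g (Equiv.swap u v (p x)))) := by
        simp_rw [conjSum, ← sum_sub_distrib]
        exact (sum_congr rfl fun u _ ↦ sum_comm).trans sum_comm
    _ = ∑ x, 4 * ((Fintype.card α : ℝ) - 1) * b (g x) (g (p x)) :=
        sum_congr rfl fun x _ ↦ (hb.comp_perm g).sum_sub_swap_apply (hp x).symm
    _ = 4 * ((Fintype.card α : ℝ) - 1) * conjSum b p g := by rw [conjSum, mul_sum]

theorem IsCentered.sum_swap_sum_sub_mul (hb : IsCentered b) (hp : ∀ x, p x ≠ x)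
    (f : Equiv.Perm α → ℝ) :
    ∑ u, ∑ v, ∑ g, (conjSum b p g - conjSum b p (g * Equiv.swap u v)) * f g =
      4 * ((Fintype.card α : ℝ) - 1) * ∑ g, conjSum b p g * f g := by
  calc ∑ u, ∑ v, ∑ g, (conjSum b p g - conjSum b p (g * Equiv.swap u v)) * f g
      = ∑ g, (∑ u, ∑ v, (conjSum b p g - conjSum b p (g * Equiv.swap u v))) * f g := by
        simp_rw [sum_mul]
        exact (sum_congr rfl fun u _ ↦ sum_comm).trans sum_comm
    _ = 4 * ((Fintype.card α : ℝ) - 1) * ∑ g, conjSum b p g * f g := by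
        simp_rw [hb.sum_sub_conjSum_mul_swap hp, mul_assoc, ← mul_sum]

theorem card_offDiag_mul_sum_apply (f : α → α → ℝ) {x y : α} (hxy : x ≠ y) :
    (Fintype.card α : ℝ) * (Fintype.card α - 1) * ∑ g : Equiv.Perm α, f (g x) (g y) =
      Fintype.card (Equiv.Perm α) * ∑ q ∈ univ.offDiag, f q.1 q.2 := by
  have hconst (q : α × α) (hq : q ∈ univ.offDiag) :
      ∑ g : Equiv.Perm α, f (g q.1) (g q.2) = ∑ g : Equiv.Perm α, f (g x) (g y) := by
    obtain ⟨r, hr⟩ := MulAction.is_two_pretransitive_iff.1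
      (Equiv.Perm.isMultiplyPretransitive α 2) hxy (mem_offDiag.1 hq).2.2
    rw [← hr.1, ← hr.2]
    exact Equiv.sum_comp (Equiv.mulRight r) fun g : Equiv.Perm α ↦ f (g x) (g y)
  have hperm (g : Equiv.Perm α) :
      ∑ q ∈ univ.offDiag, f (g q.1) (g q.2) = ∑ q ∈ univ.offDiag, f q.1 q.2 :=
    sum_equiv (g.prodCongr g) (by simp) (by simp)
  calc (Fintype.card α : ℝ) * (Fintype.card α - 1) * ∑ g : Equiv.Perm α, f (g x) (g y)
      = ∑ q ∈ univ.offDiag, ∑ g : Equiv.Perm α, f (g q.1) (g q.2) := by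
        rw [sum_congr rfl hconst, sum_const, offDiag_card, nsmul_eq_mul,
          Nat.cast_sub (Nat.le_mul_self _), card_univ]
        push_cast
        ring
    _ = ∑ g : Equiv.Perm α, ∑ q ∈ univ.offDiag, f (g q.1) (g q.2) := sum_comm
    _ = _ := by simp [hperm]

/-- The row sum at `z = p⁻¹ x` vanishes, so it may be subtracted from `conjSum b p g`.
For `y ∉ {x, z}` the terms `b (g y) (g (p y))` and `b (g z) (g y)` then cancel on average, being
exchanged by the transposition of `p y` and `z`, which fixes `x`, `p x` and `y`. -/
theorem IsCentered.sum_apply_mul_conjSum (hb : IsCentered b) (hp : ∀ x, p x ≠ x ∧ p (p x) ≠ x)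
    (x : α) :
    ∑ g : Equiv.Perm α, b (g x) (g (p x)) * conjSum b p g =
      ∑ g : Equiv.Perm α, b (g x) (g (p x)) ^ 2 := by
  set z := p.symm x with hz
  have hpz : p z = x := p.apply_symm_apply x
  have hzx : z ≠ x := fun h ↦ (hp x).1 (by rwa [h] at hpz)
  have hzpx : z ≠ p x := fun h ↦ (hp x).2 (h ▸ hpz)
  set D : α → ℝ := fun y ↦ ∑ g : Equiv.Perm α,
    b (g x) (g (p x)) * (b (g y) (g (p y)) - b (g z) (g y)) with hD
  have hD0 (y : α) (hyx : y ≠ x) (hyz : y ≠ z) : D y = 0 := by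
    have hpyx : p y ≠ x := fun h ↦ hyz (by rw [hz, ← h, p.symm_apply_apply])
    have hpypx : p y ≠ p x := p.injective.ne hyx
    have hexchange : ∑ g : Equiv.Perm α, b (g x) (g (p x)) * b (g y) (g (p y)) =
        ∑ g : Equiv.Perm α, b (g x) (g (p x)) * b (g z) (g y) := by
      rw [← Equiv.sum_comp (Equiv.mulRight (Equiv.swap (p y) z))]
      simp [Equiv.swap_apply_of_ne_of_ne hpyx.symm hzx.symm,
        Equiv.swap_apply_of_ne_of_ne hpypx.symm hzpx.symm,
        Equiv.swap_apply_of_ne_of_ne (hp y).1.symm hyz, hb.symm]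
    simp only [hD, mul_sub, sum_sub_distrib, hexchange, sub_self]
  have hsum : ∑ g : Equiv.Perm α, b (g x) (g (p x)) * conjSum b p g = ∑ y, D y := by
    rw [hD, sum_comm]
    simp_rw [← mul_sum, sum_sub_distrib, (hb.comp_perm _).sum_row]
    simp [conjSum]
  calc ∑ g : Equiv.Perm α, b (g x) (g (p x)) * conjSum b p g = D x + D z := by
        rw [hsum, ← sum_pair hzx.symm]
        refine (sum_subset (subset_univ _) fun y _ hy ↦ ?_).symm
        simp only [mem_insert, mem_singleton, not_or] at hy
        exact hD0 y hy.1 hy.2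
    _ = ∑ g : Equiv.Perm α, b (g x) (g (p x)) ^ 2 := by
        rw [hD, ← sum_add_distrib]
        refine sum_congr rfl fun g _ ↦ ?_
        rw [hpz, hb.diag]
        ring

theorem IsCentered.sum_conjSum_sq [Nonempty α] (hb : IsCentered b)
    (hp : ∀ x, p x ≠ x ∧ p (p x) ≠ x) :
    ((Fintype.card α : ℝ) - 1) * ∑ g, conjSum b p g ^ 2 =
      Fintype.card (Equiv.Perm α) * ∑ i, ∑ j, b i j ^ 2 := by
  have hexpand : ∑ g, conjSum b p g ^ 2 = ∑ x, ∑ g : Equiv.Perm α, b (g x) (g (p x)) ^ 2 := by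
    simp_rw [← hb.sum_apply_mul_conjSum hp]
    rw [sum_comm]
    simp_rw [← sum_mul, sq]
    rfl
  have hoffDiag : ∑ q ∈ univ.offDiag, b q.1 q.2 ^ 2 = ∑ i, ∑ j, b i j ^ 2 := by
    rw [← sum_product', ← diag_union_offDiag, sum_union (disjoint_diag_offDiag _)]
    simp [hb.diag]
  refine mul_left_cancel₀ (Nat.cast_ne_zero.2 (Fintype.card_ne_zero (α := α))) ?_
  rw [hexpand, ← mul_assoc, mul_sum]
  simp_rw [card_offDiag_mul_sum_apply (fun i j ↦ b i j ^ 2) (hp _).1.symm]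
  rw [hoffDiag, sum_const, card_univ, nsmul_eq_mul]

theorem IsCentered.sum_swap_sum_sq_sub (hb : IsCentered b) (hp : ∀ x, p x ≠ x) :
    ∑ u, ∑ v, ∑ g, (conjSum b p g - conjSum b p (g * Equiv.swap u v)) ^ 2 =
      8 * ((Fintype.card α : ℝ) - 1) * ∑ g, conjSum b p g ^ 2 := by
  have hsymm (u v : α) : ∑ g, (conjSum b p g - conjSum b p (g * Equiv.swap u v)) ^ 2 =
      2 * ∑ g, (conjSum b p g - conjSum b p (g * Equiv.swap u v)) * conjSum b p g := by
    rw [sum_sub_mul_right_mul_eq _ _ (Equiv.swap_mul_self u v)]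
    simp_rw [← sq]
    ring
  simp_rw [hsymm, ← mul_sum, hb.sum_swap_sum_sub_mul hp, sq]
  ring

theorem card_support_swap_le_two (u v : α) : #(Equiv.swap u v).support ≤ 2 := by
  rcases eq_or_ne u v with rfl | huv
  · simp
  · exact (Equiv.Perm.card_support_swap huv).le

theorem IsCentered.sum_conjSum_mul_exp_le [Nontrivial α] (hb : IsCentered b) {A : ℝ}
    (hA : ∀ i j, |b i j| ≤ A) (hp : ∀ x, p x ≠ x) {θ : ℝ} (hθ : 0 < θ) :
    Fintype.card (Equiv.Perm α) * ∑ g, conjSum b p g * exp (θ * conjSum b p g) ≤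
      θ * exp (40 * A * θ) * (∑ g, conjSum b p g ^ 2) * ∑ g, exp (θ * conjSum b p g) := by
  have hA0 : 0 ≤ A := (abs_nonneg _).trans (hA (Classical.arbitrary α) (Classical.arbitrary α))
  have hcard : (0 : ℝ) < Fintype.card α - 1 := by
    rw [sub_pos]; exact_mod_cast Fintype.one_lt_card
  set N : ℝ := (Fintype.card (Equiv.Perm α) : ℝ)
  set Y := conjSum b p with hY
  set m := ∑ g, exp (θ * Y g)
  have hpair (u v : α) : N * ∑ g, (Y g - Y (g * Equiv.swap u v)) * exp (θ * Y g) ≤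
      θ / 2 * (exp (40 * A * θ) * (∑ g, (Y g - Y (g * Equiv.swap u v)) ^ 2) * m) := by
    calc N * ∑ g, (Y g - Y (g * Equiv.swap u v)) * exp (θ * Y g)
        ≤ N * (θ / 2 * ∑ g, (Y g - Y (g * Equiv.swap u v)) ^ 2 * exp (θ * Y g)) := by
          exact mul_le_mul_of_nonneg_left
            (sum_sub_mul_right_mul_exp_le Y (Equiv.swap_mul_self u v) hθ) (Nat.cast_nonneg _)
      _ = θ / 2 * (N * ∑ g, (Y g - Y (g * Equiv.swap u v)) ^ 2 * exp (θ * Y g)) := by ring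
      _ ≤ θ / 2 * (exp (20 * A * #(Equiv.swap u v).support * θ) *
            (∑ g, (Y g - Y (g * Equiv.swap u v)) ^ 2) * m) := by
          exact mul_le_mul_of_nonneg_left (conjSum_decoupling hA0 hA p _ hθ.le) (by positivity)
      _ ≤ _ := by
          have hexp : 20 * A * #(Equiv.swap u v).support * θ ≤ 40 * A * θ := by
            calc _ ≤ 20 * A * 2 * θ := by gcongr; exact_mod_cast card_support_swap_le_two u v
              _ = 40 * A * θ := by ring
          gcongr
  refine le_of_mul_le_mul_left ?_ (by positivity : 0 < 4 * ((Fintype.card α : ℝ) - 1))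
  calc _ = N * ∑ u, ∑ v, ∑ g, (Y g - Y (g * Equiv.swap u v)) * exp (θ * Y g) := by
        rw [hb.sum_swap_sum_sub_mul hp]; ring
    _ ≤ ∑ u, ∑ v,
          θ / 2 * (exp (40 * A * θ) * (∑ g, (Y g - Y (g * Equiv.swap u v)) ^ 2) * m) := by
        rw [mul_sum]
        simp_rw [mul_sum univ _ N]
        exact sum_le_sum fun u _ ↦ sum_le_sum fun v _ ↦ (mul_sum _ _ N).symm.trans_le (hpair u v)
    _ = _ := by
        simp_rw [← mul_sum, ← sum_mul, ← mul_sum, hY, hb.sum_swap_sum_sq_sub hp]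
        ring

end CenteredArray

section Bernstein

variable {ι : Type*} [Fintype ι]

theorem sum_exp_mul_le_of_sum_mul_exp_le (Y : ι → ℝ) {K θ₀ : ℝ} (hθ₀ : 0 ≤ θ₀)
    (hY : ∀ θ ∈ Set.Ioo 0 θ₀, ∑ i, Y i * exp (θ * Y i) ≤ K * θ * ∑ i, exp (θ * Y i)) :
    ∑ i, exp (θ₀ * Y i) ≤ Fintype.card ι * exp (K * θ₀ ^ 2 / 2) := by
  set φ : ℝ → ℝ := fun θ ↦ (∑ i, exp (θ * Y i)) * exp (-(K * θ ^ 2 / 2)) with hφ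
  have hderiv (θ : ℝ) : HasDerivAt φ
      ((∑ i, Y i * exp (θ * Y i) - K * θ * ∑ i, exp (θ * Y i)) * exp (-(K * θ ^ 2 / 2))) θ := by
    have hsum : HasDerivAt (fun θ ↦ ∑ i, exp (θ * Y i)) (∑ i, exp (θ * Y i) * (1 * Y i)) θ :=
      .fun_sum fun i _ ↦ ((hasDerivAt_id θ).mul_const (Y i)).exp
    have hgauss := (((hasDerivAt_pow 2 θ).const_mul K).div_const 2).fun_neg.exp
    refine (hsum.mul hgauss).congr_deriv ?_
    simp_rw [one_mul, mul_comm (exp _) (Y _)]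
    push_cast
    ring
  have hanti : AntitoneOn φ (Set.Icc 0 θ₀) := by
    refine antitoneOn_of_deriv_nonpos (convex_Icc _ _)
      (fun θ _ ↦ (hderiv θ).continuousAt.continuousWithinAt)
      (fun θ _ ↦ (hderiv θ).differentiableAt.differentiableWithinAt) fun θ hθ ↦ ?_
    rw [interior_Icc] at hθ
    rw [(hderiv θ).deriv]
    exact mul_nonpos_of_nonpos_of_nonneg (sub_nonpos.2 (hY θ hθ)) (exp_pos _).le
  have hφ0 : φ 0 = Fintype.card ι := by simp [hφ]
  calc ∑ i, exp (θ₀ * Y i) = φ θ₀ * exp (K * θ₀ ^ 2 / 2) := by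
        rw [hφ, mul_assoc, ← exp_add, neg_add_cancel, exp_zero, mul_one]
    _ ≤ φ 0 * exp (K * θ₀ ^ 2 / 2) := by
        gcongr
        exact hanti (Set.left_mem_Icc.2 hθ₀) (Set.right_mem_Icc.2 hθ₀) hθ₀
    _ = Fintype.card ι * exp (K * θ₀ ^ 2 / 2) := by rw [hφ0]

theorem card_le_exp_mul_sum_exp (Y : ι → ℝ) (t : ℝ) {θ : ℝ} (hθ : 0 ≤ θ) :
    (#{i | t ≤ Y i} : ℝ) ≤ exp (-(θ * t)) * ∑ i, exp (θ * Y i) := by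
  rw [natCast_card_filter, mul_sum]
  refine sum_le_sum fun i _ ↦ ?_
  split_ifs with hi
  · rw [← exp_add, one_le_exp_iff]
    linarith [mul_le_mul_of_nonneg_left hi hθ]
  · positivity

theorem card_le_of_sum_exp_mul_le (Y : ι → ℝ) {M S c t : ℝ} (hS : 0 < S) (hc : 0 ≤ c) (ht : 0 ≤ t)
    (hY : ∀ θ, 0 ≤ θ → c * θ < 1 →
      ∑ i, exp (θ * Y i) ≤ M * exp (S / (1 - c * θ) * θ ^ 2 / 2)) :
    (#{i | t ≤ Y i} : ℝ) ≤ M * exp (-(t ^ 2) / (2 * (S + c * t))) := by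
  set θ := t / (S + c * t) with hθ
  have hθ0 : 0 ≤ θ := by positivity
  have hsub : 1 - c * θ = S / (S + c * t) := by
    rw [hθ]
    field_simp
    ring
  have hlt : c * θ < 1 := by
    rw [← sub_pos, hsub]
    positivity
  calc (#{i | t ≤ Y i} : ℝ) ≤ exp (-(θ * t)) * ∑ i, exp (θ * Y i) :=
        card_le_exp_mul_sum_exp Y t hθ0
    _ ≤ exp (-(θ * t)) * (M * exp (S / (1 - c * θ) * θ ^ 2 / 2)) := by
        gcongr
        exact hY θ hθ0 hlt
    _ = M * exp (-(t ^ 2) / (2 * (S + c * t))) := by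
        rw [mul_left_comm, ← exp_add, hsub, hθ]
        congr 2
        field_simp
        ring

end Bernstein

section Transfer

theorem measureReal_le_of_card_mem_le {Ω ι : Type*} [MeasurableSpace Ω] [Fintype ι] [Nonempty ι]
    {μ : Measure Ω} [IsProbabilityMeasure μ] {T : ι → Ω → Ω}
    (hT : ∀ i, MeasurePreserving (T i) μ μ) {Q : Set Ω} [DecidablePred (· ∈ Q)]
    (hQ : MeasurableSet Q) {C : ℝ}
    (hC : ∀ᵐ ω ∂μ, (#{i | T i ω ∈ Q} : ℝ) ≤ Fintype.card ι * C) : μ.real Q ≤ C := by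
  have hmeas (i : ι) : MeasurableSet (T i ⁻¹' Q) := (hT i).measurable hQ
  have hint (i : ι) : Integrable ((T i ⁻¹' Q).indicator (1 : Ω → ℝ)) μ :=
    (integrable_const 1).indicator (hmeas i)
  have hcard (ω : Ω) : (#{i | T i ω ∈ Q} : ℝ) = ∑ i, (T i ⁻¹' Q).indicator (1 : Ω → ℝ) ω := by
    rw [natCast_card_filter]
    exact sum_congr rfl fun i _ ↦ by by_cases hi : T i ω ∈ Q <;> simp [hi]
  refine le_of_mul_le_mul_left ?_ (Nat.cast_pos.2 (Fintype.card_pos (α := ι)))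
  calc Fintype.card ι * μ.real Q = ∑ i, μ.real (T i ⁻¹' Q) := by
        simp [fun i ↦ (hT i).measureReal_preimage hQ.nullMeasurableSet]
    _ = ∫ ω, (#{i | T i ω ∈ Q} : ℝ) ∂μ := by
        simp_rw [hcard]
        rw [integral_finsetSum _ fun i _ ↦ hint i]
        simp_rw [fun i ↦ integral_indicator_one (μ := μ) (hmeas i)]
    _ ≤ ∫ _, Fintype.card ι * C ∂μ := by
        refine integral_mono_ae ?_ (integrable_const _) hC
        simp_rw [hcard]
        exact integrable_finsetSum _ fun i _ ↦ hint i
    _ = Fintype.card ι * C := by simp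

theorem measurePreserving_conj_of_cycleType {α : Type*} [Fintype α] [DecidableEq α]
    [MeasurableSpace (Equiv.Perm α)] [DiscreteMeasurableSpace (Equiv.Perm α)]
    {μ : Measure (Equiv.Perm α)}
    (hμ : ∀ τ τ' : Equiv.Perm α, τ.cycleType = τ'.cycleType → μ {τ} = μ {τ'})
    (g : Equiv.Perm α) : MeasurePreserving (fun p ↦ g * p * g⁻¹) μ μ := by
  refine ⟨.of_discrete, Measure.ext_of_singleton fun τ ↦ ?_⟩
  have hpreimage : (fun p ↦ g * p * g⁻¹) ⁻¹' {τ} = {g⁻¹ * τ * g⁻¹⁻¹} := by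
    ext p
    simp only [Set.mem_preimage, Set.mem_singleton_iff, mul_inv_eq_iff_eq_mul, inv_inv]
    rw [mul_assoc, eq_inv_mul_iff_mul_eq]
  rw [Measure.map_apply .of_discrete (measurableSet_singleton τ), hpreimage]
  exact hμ _ _ Equiv.Perm.cycleType_conj

end Transfer

section CenteredConcentration

variable {α : Type*} [Fintype α] [DecidableEq α] [Nontrivial α] {b : α → α → ℝ} {A S : ℝ}

theorem IsCentered.sum_exp_mul_conjSum_le (hb : IsCentered b) (hA : ∀ i j, |b i j| ≤ A)
    (hS : ∑ i, ∑ j, b i j ^ 2 ≤ (Fintype.card α - 1) * S) {p : Equiv.Perm α}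
    (hp : ∀ x, p x ≠ x ∧ p (p x) ≠ x) {θ₀ : ℝ} (hθ₀ : 0 ≤ θ₀) (hAθ₀ : 40 * A * θ₀ < 1) :
    ∑ g, exp (θ₀ * conjSum b p g) ≤
      Fintype.card (Equiv.Perm α) * exp (S / (1 - 40 * A * θ₀) * θ₀ ^ 2 / 2) := by
  have hA0 : 0 ≤ A := (abs_nonneg _).trans (hA (Classical.arbitrary α) (Classical.arbitrary α))
  have hcard : (0 : ℝ) < Fintype.card α - 1 := by
    rw [sub_pos]; exact_mod_cast Fintype.one_lt_card
  have hpos : 0 < 1 - 40 * A * θ₀ := sub_pos.2 hAθ₀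
  set N : ℝ := (Fintype.card (Equiv.Perm α) : ℝ) with hN
  have hvar : ∑ g, conjSum b p g ^ 2 ≤ N * S := by
    refine le_of_mul_le_mul_left ?_ hcard
    calc _ = N * ∑ i, ∑ j, b i j ^ 2 := hb.sum_conjSum_sq hp
      _ ≤ N * ((Fintype.card α - 1) * S) := by gcongr
      _ = _ := by ring
  refine sum_exp_mul_le_of_sum_mul_exp_le _ hθ₀ fun θ hθ ↦ ?_
  have hexp : exp (40 * A * θ) ≤ 1 / (1 - 40 * A * θ₀) := by
    rw [le_div_iff₀ hpos]
    calc exp (40 * A * θ) * (1 - 40 * A * θ₀) ≤ exp (40 * A * θ₀) * exp (-(40 * A * θ₀)) := by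
          gcongr
          · exact hθ.2.le
          · exact one_sub_le_exp_neg _
      _ = 1 := by rw [← exp_add, add_neg_cancel, exp_zero]
  refine le_of_mul_le_mul_left ?_ (by positivity : 0 < N)
  have := hθ.1
  calc N * ∑ g, conjSum b p g * exp (θ * conjSum b p g)
      ≤ θ * exp (40 * A * θ) * (∑ g, conjSum b p g ^ 2) * ∑ g, exp (θ * conjSum b p g) :=
        hb.sum_conjSum_mul_exp_le hA (fun x ↦ (hp x).1) hθ.1
    _ ≤ θ * (1 / (1 - 40 * A * θ₀)) * (N * S) * ∑ g, exp (θ * conjSum b p g) := by gcongr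
    _ = _ := by ring

theorem IsCentered.card_le_conjSum_le (hb : IsCentered b) (hA : ∀ i j, |b i j| ≤ A)
    (hS0 : 0 < S) (hS : ∑ i, ∑ j, b i j ^ 2 ≤ (Fintype.card α - 1) * S) {p : Equiv.Perm α}
    (hp : ∀ x, p x ≠ x ∧ p (p x) ≠ x) {t : ℝ} (ht : 0 ≤ t) :
    (#{g | t ≤ conjSum b p g} : ℝ) ≤
      Fintype.card (Equiv.Perm α) * exp (-(t ^ 2) / (2 * (S + 40 * A * t))) := by
  have hA0 : 0 ≤ A := (abs_nonneg _).trans (hA (Classical.arbitrary α) (Classical.arbitrary α))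
  exact card_le_of_sum_exp_mul_le _ hS0 (by positivity) ht fun θ ↦
    hb.sum_exp_mul_conjSum_le hA hS hp

omit [DecidableEq α] in
theorem IsCentered.measureReal_le_sum_apply_le [MeasurableSpace (Equiv.Perm α)]
    [DiscreteMeasurableSpace (Equiv.Perm α)] (hb : IsCentered b) (hA : ∀ i j, |b i j| ≤ A)
    (hS0 : 0 < S) (hS : ∑ i, ∑ j, b i j ^ 2 ≤ (Fintype.card α - 1) * S)
    {μ : Measure (Equiv.Perm α)} [IsProbabilityMeasure μ]
    (hμ : ∀ g, MeasurePreserving (fun p ↦ g * p * g⁻¹) μ μ)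
    (hp : ∀ᵐ p ∂μ, ∀ x, p x ≠ x ∧ p (p x) ≠ x) {t : ℝ} (ht : 0 ≤ t) :
    μ.real {p | t ≤ ∑ i, b i (p i)} ≤ exp (-(t ^ 2) / (2 * (S + 40 * A * t))) := by
  classical
  refine measureReal_le_of_card_mem_le hμ .of_discrete (hp.mono fun p hp ↦ ?_)
  simp_rw [Set.mem_ofPred_eq, sum_conj_apply_eq_conjSum]
  exact hb.card_le_conjSum_le hA hS0 hS hp ht

end CenteredConcentration

section HoeffdingArray

instance (n : ℕ) : DiscreteMeasurableSpace (Equiv.Perm (Fin n)) :=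
  ⟨fun _ ↦ MeasurableSpace.measurableSet_top⟩

/-- The array `a` centred so that, for symmetric `a`, its row and column sums vanish. The diagonal
is set to zero because permutations without fixed points never see it. -/
noncomputable def centeredArray (n : ℕ) (a : Fin n → Fin n → ℝ) (i j : Fin n) : ℝ :=
  if i = j then 0 else a i j - aio n a i - aio n a j + aoo n a

theorem centeredArray_self (n : ℕ) (a : Fin n → Fin n → ℝ) (i : Fin n) :
    centeredArray n a i i = 0 :=
  if_pos rfl

theorem centeredArray_of_ne {n : ℕ} (a : Fin n → Fin n → ℝ) {i j : Fin n} (hij : i ≠ j) :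
    centeredArray n a i j = a i j - aio n a i - aio n a j + aoo n a :=
  if_neg hij

variable {n : ℕ} (hn : 2 < n) (a : Fin n → Fin n → ℝ)

include hn

theorem sum_ne_eq_mul_aio (i : Fin n) : ∑ j with j ≠ i, a i j = (n - 2) * aio n a i := by
  have : (n : ℝ) - 2 ≠ 0 := sub_ne_zero.2 (mod_cast hn.ne')
  rw [aio]
  field_simp

theorem sum_aio : ∑ i, aio n a i = (n - 1) * aoo n a := by
  have : (n : ℝ) - 1 ≠ 0 := sub_ne_zero.2 (mod_cast (Nat.lt_of_succ_lt hn).ne')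
  simp_rw [aio, aoo, ← mul_sum]
  field_simp

theorem sum_centeredArray_row (i : Fin n) : ∑ j, centeredArray n a i j = 0 := by
  calc ∑ j, centeredArray n a i j
      = ∑ j ∈ univ.erase i, (a i j - aio n a i - aio n a j + aoo n a) := by
        rw [← sum_erase univ (centeredArray_self n a i)]
        exact sum_congr rfl fun j hj ↦ centeredArray_of_ne a (ne_of_mem_erase hj).symm
    _ = ∑ j with j ≠ i, a i j - ∑ j, aio n a j - (n - 1) * (aio n a i - aoo n a) +
          aio n a i := by
        have hcard : (#(univ.erase i) : ℝ) = n - 1 := by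
          rw [card_erase_of_mem (mem_univ i), card_univ, Fintype.card_fin,
            Nat.cast_pred (Nat.zero_lt_of_lt hn)]
        simp_rw [sum_add_distrib, sum_sub_distrib, sum_const, nsmul_eq_mul, hcard,
          sum_erase_eq_sub (f := aio n a) (mem_univ i), filter_ne']
        ring
    _ = 0 := by
        rw [sum_ne_eq_mul_aio hn, sum_aio hn]
        ring

variable {a}

theorem isCentered_centeredArray (hsym : ∀ i j, i ≠ j → a i j = a j i) :
    IsCentered (centeredArray n a) where
  symm i j := by
    rcases eq_or_ne i j with rfl | hij
    · rfl
    · rw [centeredArray_of_ne a hij, centeredArray_of_ne a hij.symm, hsym i j hij]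
      ring
  diag := centeredArray_self n a
  sum_row := sum_centeredArray_row hn a

theorem sum_centeredArray_apply {p : Equiv.Perm (Fin n)} (hp : ∀ i, p i ≠ i) :
    ∑ i, centeredArray n a i (p i) = ∑ i, a i (p i) - (n - 2) * aoo n a := by
  simp_rw [fun i ↦ centeredArray_of_ne a (hp i).symm, sum_add_distrib, sum_sub_distrib,
    Equiv.sum_comp p (aio n a), sum_aio hn, sum_const, card_univ, Fintype.card_fin, nsmul_eq_mul]
  ring

theorem sum_centeredArray_sq_le (hsym : ∀ i j, i ≠ j → a i j = a j i) :
    ∑ i, ∑ j, centeredArray n a i j ^ 2 ≤ (n - 1) * sigmaF2 n a := by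
  set d : Fin n → Fin n → ℝ := fun i j ↦
    if j ≠ i then (a i j - 2 * aio n a i + aoo n a) ^ 2 else 0 with hd
  have hpoint (i j : Fin n) : centeredArray n a i j ^ 2 ≤ (d i j + d j i) / 2 := by
    rcases eq_or_ne i j with rfl | hij
    · simp [centeredArray_self, hd]
    · simp only [hd, centeredArray_of_ne a hij, hij, hij.symm, ne_eq, not_false_eq_true, if_true,
        hsym j i hij.symm]
      linarith [sq_nonneg (aio n a i - aio n a j)]
  have hne : (n : ℝ) - 1 ≠ 0 := sub_ne_zero.2 (mod_cast (Nat.lt_of_succ_lt hn).ne')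
  calc ∑ i, ∑ j, centeredArray n a i j ^ 2 ≤ ∑ i, ∑ j, (d i j + d j i) / 2 :=
        sum_le_sum fun i _ ↦ sum_le_sum fun j _ ↦ hpoint i j
    _ = ∑ i, ∑ j, d i j := by
        simp_rw [← sum_div, sum_add_distrib]
        rw [sum_comm (f := fun i j ↦ d j i)]
        ring
    _ = (n - 1) * sigmaF2 n a := by
        simp_rw [sigmaF2, hd, sum_filter]
        field_simp

omit hn in
theorem abs_centeredArray_le (hsym : ∀ i j, i ≠ j → a i j = a j i) {A : ℝ} (hA0 : 0 ≤ A)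
    (hA : ∀ i j, i ≠ j → |a i j - 2 * aio n a i + aoo n a| ≤ A) (i j : Fin n) :
    |centeredArray n a i j| ≤ A := by
  rcases eq_or_ne i j with rfl | hij
  · rwa [centeredArray_self, abs_zero]
  · have hij' := abs_le.1 (hA i j hij)
    have hji := abs_le.1 (hA j i hij.symm)
    rw [centeredArray_of_ne a hij, abs_le]
    constructor <;> linarith [hsym i j hij]

end HoeffdingArray

theorem two_lt_card_of_forall_apply_ne {α : Type*} [Fintype α] [Nonempty α] {p : Equiv.Perm α}
    (hp : ∀ x, p x ≠ x ∧ p (p x) ≠ x) : 2 < Fintype.card α :=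
  Fintype.two_lt_card_iff.2 ⟨Classical.arbitrary α, p _, p (p _), (hp _).1.symm, (hp _).2.symm,
    (hp _).1.symm⟩

theorem hoeffding_cycle_type_concentration_general (n : ℕ)
    (a : Fin n → Fin n → ℝ) (hsym : ∀ i j, i ≠ j → a i j = a j i)
    (hσ : 0 < sigmaF2 n a)
    (μ : Measure (Equiv.Perm (Fin n))) [IsProbabilityMeasure μ]
    (hconst : ∀ τ τ' : Equiv.Perm (Fin n), τ.cycleType = τ'.cycleType →
      μ {τ} = μ {τ'})
    (hnofix : ∀ᵐ p ∂μ, ∀ i, p i ≠ i ∧ p (p i) ≠ i)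
    (ao : ℝ)
    (hao : IsGreatest {x : ℝ | ∃ i j, i ≠ j ∧ x = |a i j - 2 * aio n a i + aoo n a|} ao) :
    ∀ t : ℝ, 0 ≤ t →
      (μ {p | t ≤ (∑ i, a i (p i)) - ((n : ℝ) - 2) * aoo n a}).toReal ≤
          Real.exp (-(t ^ 2) / (2 * (sigmaF2 n a + 40 * ao * t))) ∧
        (μ {p | (∑ i, a i (p i)) - ((n : ℝ) - 2) * aoo n a ≤ -t}).toReal ≤
          Real.exp (-(t ^ 2) / (2 * (sigmaF2 n a + 40 * ao * t))) := by
  intro t ht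
  obtain ⟨⟨i, j, hij, hao_eq⟩, hao_max⟩ := hao
  have : Nontrivial (Fin n) := ⟨i, j, hij⟩
  obtain ⟨p, hp⟩ := hnofix.exists
  have hn : 2 < n := by simpa using two_lt_card_of_forall_apply_ne hp
  have hb := isCentered_centeredArray hn hsym
  have hA := abs_centeredArray_le hsym (hao_eq ▸ abs_nonneg _) fun i j hij ↦
    hao_max ⟨i, j, hij, rfl⟩
  have hS := sum_centeredArray_sq_le hn hsym
  have hμ := measurePreserving_conj_of_cycleType hconst
  have hsum : ∀ᵐ p ∂μ, ∑ i, a i (p i) - (n - 2) * aoo n a = ∑ i, centeredArray n a i (p i) :=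
    hnofix.mono fun p hp ↦ (sum_centeredArray_apply hn fun i ↦ (hp i).1).symm
  constructor
  · calc _ = μ.real {p | t ≤ ∑ i, centeredArray n a i (p i)} :=
          measureReal_congr <| Filter.eventuallyEq_set.2 <| hsum.mono fun p hp ↦ by
            rw [Set.mem_ofPred_eq, hp, Set.mem_ofPred_eq]
      _ ≤ _ := hb.measureReal_le_sum_apply_le hA hσ (by simpa using hS) hμ hnofix ht
  · calc _ = μ.real {p | t ≤ ∑ i, -centeredArray n a i (p i)} :=
          measureReal_congr <| Filter.eventuallyEq_set.2 <| hsum.mono fun p hp ↦ by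
            rw [Set.mem_ofPred_eq, hp, Set.mem_ofPred_eq, sum_neg_distrib, le_neg]
      _ ≤ _ := hb.neg.measureReal_le_sum_apply_le (by simpa using hA) hσ (by simpa using hS) hμ
        hnofix ht

theorem hoeffding_cycle_type_concentration (n : ℕ) (hn : 5 ≤ n)
    (a : Fin n → Fin n → ℝ) (hsym : ∀ i j, i ≠ j → a i j = a j i)
    (hσ : 0 < sigmaF2 n a)
    (μ : Measure (Equiv.Perm (Fin n))) [IsProbabilityMeasure μ]
    (hconst : ∀ τ τ' : Equiv.Perm (Fin n), τ.cycleType = τ'.cycleType →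
      μ {τ} = μ {τ'})
    (hnofix : ∀ᵐ p ∂μ, ∀ i, p i ≠ i ∧ p (p i) ≠ i)
    (ao : ℝ)
    (hao : IsGreatest {x : ℝ | ∃ i j, i ≠ j ∧ x = |a i j - 2 * aio n a i + aoo n a|} ao) :
    ∀ t : ℝ, 0 ≤ t →
      (μ {p | t ≤ (∑ i, a i (p i)) - ((n : ℝ) - 2) * aoo n a}).toReal ≤
          Real.exp (-(t ^ 2) / (2 * (sigmaF2 n a + 40 * ao * t))) ∧
        (μ {p | (∑ i, a i (p i)) - ((n : ℝ) - 2) * aoo n a ≤ -t}).toReal ≤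
          Real.exp (-(t ^ 2) / (2 * (sigmaF2 n a + 40 * ao * t))) :=
  hoeffding_cycle_type_concentration_general n a hsym hσ μ hconst hnofix ao hao
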